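/- Let ε, T > 0 and define δ(ε, T) := min{ε/2, ε³/(240 T⁵)}. Let Γ ∈ ℝ^{p×p} be a connected interconnection, r ∈ ℝ^p satisfy r^T Γ = 0 and r^T 1 = 1, and Ω ∈ ℝ^{p×p} be symmetric positive definite with (Γ − 1 r^T)^T Ω + Ω (Γ − 1 r^T) = −I_p. Define ρ(Γ) := σ_max(Ω) · max{1, |Γ|³} and V(x) := x^T (Ω ⊗ I_n) x. Then for every Q : ℝ≥0 → Q̄_n (Riemann-integrable) with σ_min(∫₀^T Q_t dt) ≥ ε, every solution x of ẋ(t) = (Γ ⊗ Q_t) x(t) satisfies V(x(T) − x̄) ≤ (1 − δ(ε,T)/ρ(Γ)) · V(x(0) − x̄), where x̄ := (1 r^T ⊗ I_n) x(0). -/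

import Mathlib

open Matrix MeasureTheory Filter
open scoped Kronecker

noncomputable section

/-- Euclidean norm of a vector. -/
def eunorm {ι : Type*} [Fintype ι] (v : ι → ℝ) : ℝ := Real.sqrt (∑ i, v i ^ 2)

/-- Spectral (induced 2-) norm of a matrix. -/
def specNorm {m n : Type*} [Fintype m] [Fintype n] (M : Matrix m n ℝ) : ℝ :=
  sSup {c : ℝ | ∃ v : n → ℝ, eunorm v ≤ 1 ∧ c = eunorm (M.mulVec v)}

/-- Smallest singular value of a matrix. -/
def sigmaMin {m n : Type*} [Fintype m] [Fintype n] (M : Matrix m n ℝ) : ℝ :=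
  sInf {c : ℝ | ∃ v : n → ℝ, eunorm v = 1 ∧ c = eunorm (M.mulVec v)}

/-- Largest singular value of a matrix. -/
def sigmaMax {m n : Type*} [Fintype m] [Fintype n] (M : Matrix m n ℝ) : ℝ :=
  sSup {c : ℝ | ∃ v : n → ℝ, eunorm v = 1 ∧ c = eunorm (M.mulVec v)}

/-- A continuous-time interconnection matrix. -/
def IsInterconnection {p : ℕ} (Γ : Matrix (Fin p) (Fin p) ℝ) : Prop :=
  (∀ i j, i ≠ j → 0 ≤ Γ i j) ∧
  ∀ i, Γ i i = -∑ j ∈ Finset.univ.filter (fun j => j ≠ i), Γ i j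

/-- Connectedness of the graph of a matrix. -/
def ConnectedMat {p : ℕ} (Γ : Matrix (Fin p) (Fin p) ℝ) : Prop :=
  ∃ v : Fin p, ∀ u : Fin p, Relation.ReflTransGen (fun i j => 0 < Γ i j) u v

/-- Membership in `Q̄_n`: symmetric positive semidefinite with spectral norm at most 1. -/
def InQbar {n : ℕ} (R : Matrix (Fin n) (Fin n) ℝ) : Prop :=
  R.PosSemidef ∧ specNorm R ≤ 1

/-- `δ(ε, T) = min{ε/2, ε³/(240 T⁵)}`. -/
def deltaCT (ε T : ℝ) : ℝ := min (ε / 2) (ε ^ 3 / (240 * T ^ 5))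

/-- Sufficient excitation for `Q : ℝ≥0 → Q_n`. -/
def SuffExcitingCT {n : ℕ} (Q : ℝ → Matrix (Fin n) (Fin n) ℝ) : Prop :=
  ∃ ε T : ℕ → ℝ, (∀ i, 0 < ε i) ∧ (∀ i, 0 < T i) ∧
    (∀ i, ε i ≤ sigmaMin (Matrix.of fun a b =>
      ∫ t in (∑ j ∈ Finset.range i, T j)..((∑ j ∈ Finset.range i, T j) + T i), Q t a b)) ∧
    Tendsto (fun N => ∑ i ∈ Finset.range N, deltaCT (ε i) (T i)) atTop atTop

/-- Persistence of excitation for `Q : ℝ≥0 → Q_n`. -/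
def PersExcitingCT {n : ℕ} (Q : ℝ → Matrix (Fin n) (Fin n) ℝ) : Prop :=
  ∃ ε T : ℝ, 0 < ε ∧ 0 < T ∧ ∀ t : ℝ, 0 ≤ t →
    ε ≤ sigmaMin (Matrix.of fun a b => ∫ s in t..(t + T), Q s a b)

section Norms

variable {m n : Type*} [Fintype m] [Fintype n]

lemma eunorm_nonneg (v : n → ℝ) : 0 ≤ eunorm v := Real.sqrt_nonneg _

lemma eunorm_sq (v : n → ℝ) : eunorm v ^ 2 = v ⬝ᵥ v := by
  rw [eunorm, Real.sq_sqrt (Finset.sum_nonneg fun i _ => sq_nonneg (v i))]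
  simp [dotProduct, sq]

lemma eunorm_eq_norm (v : n → ℝ) : eunorm v = ‖WithLp.toLp 2 v‖ := by
  simp [eunorm, EuclideanSpace.norm_eq]

lemma eunorm_smul (c : ℝ) (v : n → ℝ) : eunorm (c • v) = |c| * eunorm v := by
  rw [eunorm_eq_norm, eunorm_eq_norm, WithLp.toLp_smul, norm_smul, Real.norm_eq_abs]

lemma dotProduct_le_eunorm_mul (v w : n → ℝ) : v ⬝ᵥ w ≤ eunorm v * eunorm w := by
  rw [eunorm, eunorm]
  exact Real.sum_mul_le_sqrt_mul_sqrt _ _ _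

lemma bddAbove_eunorm_mulVec (M : Matrix m n ℝ) :
    BddAbove {c : ℝ | ∃ v : n → ℝ, eunorm v ≤ 1 ∧ c = eunorm (M.mulVec v)} := by
  classical
  refine ⟨‖LinearMap.toContinuousLinearMap (Matrix.toEuclideanLin M)‖, ?_⟩
  rintro c ⟨v, hv, rfl⟩
  rw [eunorm_eq_norm] at hv
  rw [eunorm_eq_norm]
  refine le_trans ((LinearMap.toContinuousLinearMap (Matrix.toEuclideanLin M)).le_opNorm
    (WithLp.toLp 2 v)) ?_
  exact mul_le_of_le_one_right (norm_nonneg _) hv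

lemma eunorm_mulVec_normalize {M : Matrix m n ℝ} {v : n → ℝ} (hv : eunorm v ≠ 0) :
    eunorm ((eunorm v)⁻¹ • v) = 1 ∧
      eunorm (M *ᵥ v) = eunorm (M *ᵥ ((eunorm v)⁻¹ • v)) * eunorm v := by
  rw [mulVec_smul, eunorm_smul, eunorm_smul, abs_of_nonneg (inv_nonneg.2 (eunorm_nonneg v))]
  constructor <;> field_simp

lemma eunorm_mulVec_eq_zero (M : Matrix m n ℝ) {v : n → ℝ} (hv : eunorm v = 0) :
    eunorm (M *ᵥ v) = 0 := by
  have : v = 0 := by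
    rw [eunorm_eq_norm, norm_eq_zero] at hv
    simpa using hv
  simp [this, eunorm]

lemma eunorm_mulVec_le_specNorm (M : Matrix m n ℝ) (v : n → ℝ) :
    eunorm (M *ᵥ v) ≤ specNorm M * eunorm v := by
  by_cases hv : eunorm v = 0
  · simp [eunorm_mulVec_eq_zero M hv, hv]
  · obtain ⟨h1, h2⟩ := eunorm_mulVec_normalize (M := M) hv
    rw [h2]
    exact mul_le_mul_of_nonneg_right (le_csSup (bddAbove_eunorm_mulVec M) ⟨_, h1.le, rfl⟩)
      (eunorm_nonneg v)

lemma eunorm_mulVec_le_sigmaMax (M : Matrix m n ℝ) (v : n → ℝ) :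
    eunorm (M *ᵥ v) ≤ sigmaMax M * eunorm v := by
  by_cases hv : eunorm v = 0
  · simp [eunorm_mulVec_eq_zero M hv, hv]
  · obtain ⟨h1, h2⟩ := eunorm_mulVec_normalize (M := M) hv
    rw [h2]
    refine mul_le_mul_of_nonneg_right (le_csSup ?_ ⟨_, h1, rfl⟩) (eunorm_nonneg v)
    refine (bddAbove_eunorm_mulVec M).mono ?_
    rintro c ⟨w, hw, rfl⟩
    exact ⟨w, hw.le, rfl⟩

lemma sigmaMin_mul_le_eunorm_mulVec (M : Matrix m n ℝ) (v : n → ℝ) :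
    sigmaMin M * eunorm v ≤ eunorm (M *ᵥ v) := by
  by_cases hv : eunorm v = 0
  · simp [eunorm_mulVec_eq_zero M hv, hv]
  · obtain ⟨h1, h2⟩ := eunorm_mulVec_normalize (M := M) hv
    rw [h2]
    refine mul_le_mul_of_nonneg_right (csInf_le ?_ ⟨_, h1, rfl⟩) (eunorm_nonneg v)
    refine ⟨0, ?_⟩
    rintro c ⟨w, -, rfl⟩
    exact eunorm_nonneg _

lemma sigmaMax_nonneg (M : Matrix m n ℝ) : 0 ≤ sigmaMax M := by
  apply Real.sSup_nonneg
  rintro c ⟨w, -, rfl⟩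
  exact eunorm_nonneg _

lemma specNorm_nonneg (M : Matrix m n ℝ) : 0 ≤ specNorm M := by
  apply Real.sSup_nonneg
  rintro c ⟨w, -, rfl⟩
  exact eunorm_nonneg _

end Norms

section PosSemidef

variable {n : Type*} [Fintype n]

lemma dotProduct_mulVec_symm {A : Matrix n n ℝ} (hA : A.IsHermitian) (v w : n → ℝ) :
    v ⬝ᵥ A *ᵥ w = w ⬝ᵥ A *ᵥ v := by
  have hAt : Aᵀ = A := by simpa using hA.eq
  rw [dotProduct_mulVec, ← mulVec_transpose, hAt, dotProduct_comm]

variable [DecidableEq n]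

/-- A symmetric matrix dominated in Euclidean norm by `c` is at most `c • 1`. -/
lemma posSemidef_smul_one_sub {M : Matrix n n ℝ} (hM : M.IsHermitian) {c : ℝ}
    (h : ∀ v, eunorm (M *ᵥ v) ≤ c * eunorm v) : (c • (1 : Matrix n n ℝ) - M).PosSemidef := by
  refine .of_dotProduct_mulVec_nonneg ((isHermitian_one.smul (IsSelfAdjoint.all c)).sub hM) fun v => ?_
  have h1 := dotProduct_le_eunorm_mul v (M *ᵥ v)
  have h2 := mul_le_mul_of_nonneg_left (h v) (eunorm_nonneg v)
  have h3 := congrArg (c * ·) (eunorm_sq v)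
  simp only [star_trivial, sub_mulVec, smul_mulVec, one_mulVec, dotProduct_sub, dotProduct_smul,
    smul_eq_mul]
  nlinarith

/-- A positive semidefinite matrix expanding Euclidean norms by `c` is at least `c • 1`. -/
lemma posSemidef_sub_smul_one {M : Matrix n n ℝ} (hM : M.PosSemidef) {c : ℝ}
    (h : ∀ v, c * eunorm v ≤ eunorm (M *ᵥ v)) : (M - c • (1 : Matrix n n ℝ)).PosSemidef := by
  have hH : (M - c • (1 : Matrix n n ℝ)).IsHermitian := hM.1.sub (isHermitian_one.smul (IsSelfAdjoint.all c))
  rw [hH.posSemidef_iff_eigenvalues_nonneg]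
  intro i
  have hmul := hH.mulVec_eigenvectorBasis i
  set μ := hH.eigenvalues i
  have hunit : eunorm (hH.eigenvectorBasis i).ofLp = 1 := by
    rw [eunorm_eq_norm]
    exact hH.eigenvectorBasis.orthonormal.1 i
  set u := (hH.eigenvectorBasis i).ofLp
  have hMu : M *ᵥ u = (μ + c) • u := by
    rw [sub_mulVec, smul_mulVec, one_mulVec, sub_eq_iff_eq_add] at hmul
    rw [hmul, add_smul]
  have hpos := hM.dotProduct_mulVec_nonneg u
  have hexp := h u
  rw [hMu, eunorm_smul, hunit] at hexp
  rw [hMu, star_trivial, dotProduct_smul, ← eunorm_sq, hunit] at hpos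
  simp only [smul_eq_mul, one_pow, mul_one] at hpos hexp
  rw [abs_of_nonneg hpos] at hexp
  show 0 ≤ μ
  linarith

/-- If `0 ≤ A ≤ 1` then `A² ≤ A`. -/
lemma mulVec_dotProduct_mulVec_le {A : Matrix n n ℝ} (hA : A.PosSemidef)
    (hA1 : (1 - A).PosSemidef) (v : n → ℝ) : A *ᵥ v ⬝ᵥ A *ᵥ v ≤ v ⬝ᵥ A *ᵥ v := by
  have h1 := hA.dotProduct_mulVec_nonneg (v - A *ᵥ v)
  have h2 := hA1.dotProduct_mulVec_nonneg (A *ᵥ v)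
  have h3 := dotProduct_mulVec_symm hA.1 v (A *ᵥ v)
  simp only [star_trivial, mulVec_sub, sub_dotProduct, dotProduct_sub, sub_mulVec,
    one_mulVec] at h1 h2
  linarith

/-- Young's inequality for the quadratic form of a matrix `A` with `0 ≤ A ≤ 1`. -/
lemma quadForm_le_of_sub {A : Matrix n n ℝ} (hA : A.PosSemidef) (hA1 : (1 - A).PosSemidef)
    (v w : n → ℝ) :
    v ⬝ᵥ A *ᵥ v ≤ 3 / 2 * (w ⬝ᵥ A *ᵥ w) + 3 * ((w - v) ⬝ᵥ (w - v)) := by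
  have h1 := hA.dotProduct_mulVec_nonneg (w + (2 : ℝ) • (w - v))
  have h2 := hA1.dotProduct_mulVec_nonneg (w - v)
  have h3 := dotProduct_mulVec_symm hA.1 v w
  simp only [star_trivial, mulVec_sub, mulVec_smul, mulVec_add, add_dotProduct, dotProduct_add,
    sub_dotProduct, dotProduct_sub, sub_mulVec, one_mulVec, smul_dotProduct, dotProduct_smul, smul_eq_mul] at h1 h2 ⊢
  linarith

end PosSemidef

section Calculus

variable {ι : Type*} [Fintype ι]

lemma HasDerivAt.matrix_mulVec_const {κ : Type*} [Fintype κ] {z : ℝ → ι → ℝ} {z' : ι → ℝ} {t : ℝ}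
    (A : Matrix κ ι ℝ) (hz : HasDerivAt z z' t) : HasDerivAt (fun s => A *ᵥ z s) (A *ᵥ z') t := by
  rw [hasDerivAt_pi] at hz ⊢
  intro i
  exact HasDerivAt.fun_sum fun j _ => (hz j).const_mul (A i j)

lemma HasDerivAt.dotProduct_fun {v w : ℝ → ι → ℝ} {v' w' : ι → ℝ} {t : ℝ}
    (hv : HasDerivAt v v' t) (hw : HasDerivAt w w' t) :
    HasDerivAt (fun s => v s ⬝ᵥ w s) (v' ⬝ᵥ w t + v t ⬝ᵥ w') t := by
  rw [hasDerivAt_pi] at hv hw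
  simp only [dotProduct, ← Finset.sum_add_distrib]
  exact HasDerivAt.fun_sum fun j _ => (hv j).mul (hw j)

lemma intervalIntegrable_fun_sum {f : ι → ℝ → ℝ} {a b : ℝ}
    (hf : ∀ i, IntervalIntegrable (f i) volume a b) :
    IntervalIntegrable (fun t => ∑ i, f i t) volume a b := by
  simpa only [Finset.sum_fn] using IntervalIntegrable.sum Finset.univ fun i _ => hf i

lemma intervalIntegrable_quadForm {A : ℝ → Matrix ι ι ℝ} {a b : ℝ}
    (hA : ∀ i j, IntervalIntegrable (fun t => A t i j) volume a b) (v : ι → ℝ) :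
    IntervalIntegrable (fun t => v ⬝ᵥ A t *ᵥ v) volume a b := by
  simp only [dotProduct, mulVec]
  refine intervalIntegrable_fun_sum fun i => IntervalIntegrable.const_mul ?_ _
  exact intervalIntegrable_fun_sum fun j => (hA i j).mul_const _

lemma integral_quadForm {A : ℝ → Matrix ι ι ℝ} {a b : ℝ}
    (hA : ∀ i j, IntervalIntegrable (fun t => A t i j) volume a b) (v : ι → ℝ) :
    ∫ t in a..b, v ⬝ᵥ A t *ᵥ v = v ⬝ᵥ (Matrix.of fun i j => ∫ t in a..b, A t i j) *ᵥ v := by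
  simp only [dotProduct, mulVec, of_apply]
  rw [intervalIntegral.integral_finsetSum]
  · refine Finset.sum_congr rfl fun i _ => ?_
    rw [intervalIntegral.integral_const_mul, intervalIntegral.integral_finsetSum]
    · simp only [intervalIntegral.integral_mul_const]
    · exact fun j _ => (hA i j).mul_const _
  · exact fun i _ => IntervalIntegrable.const_mul
      (intervalIntegrable_fun_sum fun j => (hA i j).mul_const _) _

/-- A curve whose squared speed is at most `g²` times the decay rate of `U` moves, in time `t`,
by a squared distance of at most `g² t` times the decay of `U`. -/
lemma sq_displacement_le {z z' : ℝ → ι → ℝ} {U q : ℝ → ℝ} {g t : ℝ} (ht : 0 < t)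
    (hz : ∀ s, 0 ≤ s → HasDerivAt z (z' s) s) (hU : ∀ s, 0 ≤ s → HasDerivAt U (-q s) s)
    (hspeed : ∀ s, 0 ≤ s → z' s ⬝ᵥ z' s ≤ g ^ 2 * q s) :
    (z t - z 0) ⬝ᵥ (z t - z 0) ≤ g ^ 2 * t * (U 0 - U t) := by
  set w := z t - z 0 with hw
  set N := w ⬝ᵥ w with hN
  have hder : ∀ s, 0 ≤ s → HasDerivAt
      (fun s => N / (2 * t) * s - g ^ 2 * t / 2 * U s - w ⬝ᵥ z s)
      (N / (2 * t) + g ^ 2 * t / 2 * q s - w ⬝ᵥ z' s) s := by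
    intro s hs
    have h1 := (hasDerivAt_const s w).dotProduct_fun (hz s hs)
    have h2 := (((hasDerivAt_id s).const_mul (N / (2 * t))).sub
      ((hU s hs).const_mul (g ^ 2 * t / 2))).sub h1
    refine h2.congr_deriv ?_
    simp
  have hmono := monotoneOn_of_hasDerivWithinAt_nonneg (convex_Icc 0 t)
    (fun s hs => (hder s hs.1).continuousAt.continuousWithinAt)
    (fun s hs => (hder s (interior_subset hs).1).hasDerivWithinAt) (fun s hs => by
      have h0 := hspeed s (interior_subset hs).1
      have h1 : 0 ≤ (w - t • z' s) ⬝ᵥ (w - t • z' s) :=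
        Finset.sum_nonneg fun i _ => mul_self_nonneg _
      simp only [sub_dotProduct, dotProduct_sub, smul_dotProduct, dotProduct_smul,
        smul_eq_mul, dotProduct_comm (z' s) w] at h1
      have h2 : 0 ≤ (N - 2 * t * (w ⬝ᵥ z' s) + t * (t * (z' s ⬝ᵥ z' s))) / (2 * t) :=
        div_nonneg (by linarith) (by positivity)
      have h3 : (N - 2 * t * (w ⬝ᵥ z' s) + t * (t * (z' s ⬝ᵥ z' s))) / (2 * t) =
          N / (2 * t) - w ⬝ᵥ z' s + t / 2 * (z' s ⬝ᵥ z' s) := by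
        field_simp
      have h4 := mul_le_mul_of_nonneg_left h0 (by positivity : 0 ≤ t / 2)
      linarith)
  have hle := hmono (Set.left_mem_Icc.2 ht.le) (Set.right_mem_Icc.2 ht.le) ht.le
  have hNw : N = w ⬝ᵥ z t - w ⬝ᵥ z 0 := by rw [hN, ← dotProduct_sub]
  have hNt : N / (2 * t) * t = N / 2 := by field_simp
  simp only [mul_zero, hNt] at hle
  linarith

/-- If `U` decays at the rate of the quadratic form of `A` along a curve `z` whose speed is
controlled by that form, then the decay of `U` bounds the excitation of the initial state. -/
lemma integral_quadForm_initial_le [DecidableEq ι] {z z' : ℝ → ι → ℝ} {U : ℝ → ℝ}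
    {A : ℝ → Matrix ι ι ℝ} {g T : ℝ} (hT : 0 < T)
    (hA : ∀ s, 0 ≤ s → (A s).PosSemidef) (hA1 : ∀ s, 0 ≤ s → (1 - A s).PosSemidef)
    (hAint : ∀ i j, IntervalIntegrable (fun t => A t i j) volume 0 T)
    (hz : ∀ s, 0 ≤ s → HasDerivAt z (z' s) s)
    (hU : ∀ s, 0 ≤ s → HasDerivAt U (-(z s ⬝ᵥ A s *ᵥ z s)) s)
    (hspeed : ∀ s, 0 ≤ s → z' s ⬝ᵥ z' s ≤ g ^ 2 * (z s ⬝ᵥ A s *ᵥ z s)) :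
    ∫ t in (0 : ℝ)..T, z 0 ⬝ᵥ A t *ᵥ z 0 ≤ 3 / 2 * (1 + g ^ 2 * T ^ 2) * (U 0 - U T) := by
  have hanti : AntitoneOn U (Set.Icc 0 T) :=
    antitoneOn_of_hasDerivWithinAt_nonpos (convex_Icc 0 T)
      (fun s hs => (hU s hs.1).continuousAt.continuousWithinAt)
      (fun s hs => (hU s (interior_subset hs).1).hasDerivWithinAt)
      (fun s hs => neg_nonpos.2 ((hA s (interior_subset hs).1).dotProduct_mulVec_nonneg (z s)))
  have hder : ∀ s, 0 ≤ s → HasDerivAt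
      (fun s => -(3 / 2) * U s + 3 / 2 * g ^ 2 * (U 0 - U T) * s ^ 2)
      (3 / 2 * (z s ⬝ᵥ A s *ᵥ z s) + 3 * (g ^ 2 * s * (U 0 - U T))) s := by
    intro s hs
    refine (((hU s hs).const_mul (-(3 / 2))).add
      ((hasDerivAt_pow 2 s).const_mul (3 / 2 * g ^ 2 * (U 0 - U T)))).congr_deriv ?_
    simp
    ring
  have := intervalIntegral.integral_le_sub_of_hasDeriv_right_of_le hT.le
    (fun s hs => (hder s hs.1).continuousAt.continuousWithinAt)
    (fun s hs => (hder s hs.1.le).hasDerivWithinAt)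
    ((intervalIntegrable_iff_integrableOn_Icc_of_le hT.le).1
      (intervalIntegrable_quadForm hAint (z 0)))
    (fun s hs => by
      refine (quadForm_le_of_sub (hA s hs.1.le) (hA1 s hs.1.le) (z 0) (z s)).trans ?_
      have h1 := sq_displacement_le hs.1 hz hU hspeed
      have h2 := hanti ⟨hs.1.le, hs.2.le⟩ ⟨hT.le, le_rfl⟩ hs.2.le
      have h3 : g ^ 2 * s * (U 0 - U s) ≤ g ^ 2 * s * (U 0 - U T) :=
        mul_le_mul_of_nonneg_left (by linarith) (mul_nonneg (sq_nonneg g) hs.1.le)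
      linarith)
  refine this.trans (le_of_eq ?_)
  ring

end Calculus

lemma deltaCT_mul_le {ε T g : ℝ} (hε : 0 < ε) (hT : 0 < T) (hεT : ε ≤ T) (hg : 0 ≤ g) :
    deltaCT ε T * (3 / 2 * (1 + g ^ 2 * T ^ 2)) ≤ ε * max 1 (g ^ 3) := by
  have hδ0 : 0 ≤ deltaCT ε T := le_min (by positivity) (by positivity)
  have hm1 : 1 ≤ max 1 (g ^ 3) := le_max_left _ _
  have hm2 : g ^ 2 ≤ max 1 (g ^ 3) := by
    rcases le_total g 1 with h | h
    · exact (pow_le_one₀ hg h).trans hm1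
    · exact (pow_le_pow_right₀ h (by norm_num)).trans (le_max_right _ _)
  have hδ : deltaCT ε T * (3 / 2 * (1 + T ^ 2)) ≤ ε := by
    rcases le_total (3 * T ^ 2) 1 with h | h
    · have : deltaCT ε T ≤ ε / 2 := min_le_left _ _
      nlinarith
    · have h1 : deltaCT ε T ≤ ε ^ 3 / (240 * T ^ 5) := min_le_right _ _
      have h2 : ε ^ 3 / (240 * T ^ 5) ≤ ε / (240 * T ^ 3) := by
        rw [div_le_div_iff₀ (by positivity) (by positivity)]
        have : ε ^ 2 ≤ T ^ 2 := pow_le_pow_left₀ hε.le hεT 2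
        have := mul_le_mul_of_nonneg_left this (by positivity : 0 ≤ ε * 240 * T ^ 3)
        nlinarith
      have hT' : 1 / 2 ≤ T := by nlinarith
      have h3 : ε / (240 * T ^ 3) * (6 * T ^ 2) ≤ ε := by
        have : ε / (240 * T ^ 3) * (6 * T ^ 2) = ε / (40 * T) := by field_simp; norm_num
        rw [this]
        exact div_le_self hε.le (by linarith)
      calc _ ≤ deltaCT ε T * (6 * T ^ 2) := mul_le_mul_of_nonneg_left (by linarith) hδ0
        _ ≤ ε / (240 * T ^ 3) * (6 * T ^ 2) :=
          mul_le_mul_of_nonneg_right (h1.trans h2) (by positivity)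
        _ ≤ ε := h3
  have hgT : 1 + g ^ 2 * T ^ 2 ≤ max 1 (g ^ 3) * (1 + T ^ 2) := by nlinarith [sq_nonneg T]
  calc _ ≤ deltaCT ε T * (3 / 2 * (max 1 (g ^ 3) * (1 + T ^ 2))) := by gcongr
    _ = deltaCT ε T * (3 / 2 * (1 + T ^ 2)) * max 1 (g ^ 3) := by ring
    _ ≤ ε * max 1 (g ^ 3) := by gcongr

section Kronecker

variable {l m n p : Type*}

lemma Matrix.sub_kronecker (A B : Matrix l m ℝ) (C : Matrix n p ℝ) :
    (A - B) ⊗ₖ C = A ⊗ₖ C - B ⊗ₖ C := by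
  ext i j
  simp [sub_mul]

lemma Matrix.kronecker_sub (A : Matrix l m ℝ) (B C : Matrix n p ℝ) :
    A ⊗ₖ (B - C) = A ⊗ₖ B - A ⊗ₖ C := by
  ext i j
  simp [mul_sub]

lemma Matrix.neg_kronecker (A : Matrix l m ℝ) (B : Matrix n p ℝ) : (-A) ⊗ₖ B = -(A ⊗ₖ B) := by
  ext i j
  simp

end Kronecker

lemma IsInterconnection.mulVec_one {p : ℕ} {Γ : Matrix (Fin p) (Fin p) ℝ}
    (hΓ : IsInterconnection Γ) : Γ *ᵥ (fun _ => (1 : ℝ)) = 0 := by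
  ext i
  have h := hΓ.2 i
  rw [Finset.filter_ne'] at h
  simp only [mulVec, dotProduct, mul_one, Pi.zero_apply]
  rw [← Finset.add_sum_erase _ _ (Finset.mem_univ i), h]
  ring

lemma kronecker_one_mulVec_dotProduct_le {p n : Type*} [Fintype p] [Fintype n] [DecidableEq p]
    [DecidableEq n] (Γ : Matrix p p ℝ) (w : p × n → ℝ) :
    (Γ ⊗ₖ (1 : Matrix n n ℝ)) *ᵥ w ⬝ᵥ (Γ ⊗ₖ (1 : Matrix n n ℝ)) *ᵥ w ≤
      specNorm Γ ^ 2 * (w ⬝ᵥ w) := by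
  have hΓ : (specNorm Γ ^ 2 • (1 : Matrix p p ℝ) - Γᵀ * Γ).PosSemidef := by
    refine .of_dotProduct_mulVec_nonneg ?_ fun v => ?_
    · exact (isHermitian_one.smul (IsSelfAdjoint.all _)).sub
        (by simpa using isHermitian_conjTranspose_mul_self Γ)
    · have h := pow_le_pow_left₀ (eunorm_nonneg _) (eunorm_mulVec_le_specNorm Γ v) 2
      rw [mul_pow, eunorm_sq, eunorm_sq] at h
      rw [star_trivial, sub_mulVec, smul_mulVec, one_mulVec, dotProduct_sub, dotProduct_smul,
        smul_eq_mul, ← mulVec_mulVec, dotProduct_mulVec, vecMul_transpose]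
      linarith
  have h := (hΓ.kronecker (PosSemidef.one (n := n))).dotProduct_mulVec_nonneg w
  have hsplit : (Γᵀ * Γ) ⊗ₖ (1 : Matrix n n ℝ) =
      (Γ ⊗ₖ (1 : Matrix n n ℝ))ᵀ * (Γ ⊗ₖ (1 : Matrix n n ℝ)) := by
    rw [← kroneckerMap_transpose, ← mul_kronecker_mul, transpose_one, Matrix.one_mul]
  rw [sub_kronecker, smul_kronecker, one_kronecker_one, hsplit, star_trivial, sub_mulVec,
    smul_mulVec, one_mulVec, dotProduct_sub, dotProduct_smul, smul_eq_mul, ← mulVec_mulVec,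
    dotProduct_mulVec w, vecMul_transpose] at h
  linarith

theorem stmt4 {p n : ℕ} (ε T : ℝ) (hε : 0 < ε) (hT : 0 < T)
    (Γ : Matrix (Fin p) (Fin p) ℝ)
    (hΓ : IsInterconnection Γ) (hconn : ConnectedMat Γ)
    (r : Fin p → ℝ) (hr1 : Matrix.vecMul r Γ = 0) (hr2 : ∑ i, r i = 1)
    (Ω : Matrix (Fin p) (Fin p) ℝ) (hΩs : Ω.IsSymm) (hΩpd : Ω.PosDef)
    (hlyap : (Γ - vecMulVec (fun _ => (1 : ℝ)) r)ᵀ * Ω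
        + Ω * (Γ - vecMulVec (fun _ => (1 : ℝ)) r) = -1)
    (V : ((Fin p × Fin n) → ℝ) → ℝ)
    (hV : ∀ z, V z = z ⬝ᵥ ((Ω ⊗ₖ (1 : Matrix (Fin n) (Fin n) ℝ)).mulVec z))
    (Q : ℝ → Matrix (Fin n) (Fin n) ℝ)
    (hQ : ∀ t : ℝ, 0 ≤ t → InQbar (Q t))
    (hQint : ∀ a b : Fin n, ∀ s u : ℝ, IntervalIntegrable (fun t => Q t a b) volume s u)
    (hQε : ε ≤ sigmaMin (Matrix.of fun a b => ∫ t in (0 : ℝ)..T, Q t a b))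
    (x : ℝ → (Fin p × Fin n) → ℝ)
    (hx : ∀ t : ℝ, 0 ≤ t → ∀ i, HasDerivAt (fun s => x s i) (((Γ ⊗ₖ Q t).mulVec (x t)) i) t)
    (xbar : (Fin p × Fin n) → ℝ)
    (hxbar : xbar = ((vecMulVec (fun _ => (1 : ℝ)) r) ⊗ₖ (1 : Matrix (Fin n) (Fin n) ℝ)).mulVec (x 0)) :
    V (x T - xbar)
      ≤ (1 - deltaCT ε T / (sigmaMax Ω * max 1 (specNorm Γ ^ 3))) * V (x 0 - xbar) := by
  classical
  set P : Matrix (Fin p) (Fin p) ℝ := vecMulVec (fun _ => (1 : ℝ)) r with hP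
  have hΓP : Γ * P = 0 := by
    rw [hP, mul_vecMulVec, hΓ.mulVec_one, zero_vecMulVec]
  have hPΓ : P * Γ = 0 := by
    rw [hP, vecMulVec_mul, hr1, vecMulVec_zero]
  have hPP : P * P = P := by
    ext i j
    simp [hP, mul_apply, vecMulVec_apply, ← Finset.sum_mul, hr2]
  have hPkron (M : Matrix (Fin n) (Fin n) ℝ) (w : Fin p × Fin n → ℝ) :
      (P ⊗ₖ M) *ᵥ w = (1 ⊗ₖ M) *ᵥ (P ⊗ₖ (1 : Matrix (Fin n) (Fin n) ℝ)) *ᵥ w := by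
    rw [mulVec_mulVec, ← mul_kronecker_mul, Matrix.one_mul, Matrix.mul_one]
  have hxd : ∀ t, 0 ≤ t → HasDerivAt x ((Γ ⊗ₖ Q t) *ᵥ x t) t := fun t ht =>
    hasDerivAt_pi.2 (hx t ht)
  have hmean : ∀ t, 0 ≤ t → (P ⊗ₖ (1 : Matrix (Fin n) (Fin n) ℝ)) *ᵥ x t = xbar := by
    intro t ht
    have hder : ∀ s, 0 ≤ s →
        HasDerivAt (fun s => (P ⊗ₖ (1 : Matrix (Fin n) (Fin n) ℝ)) *ᵥ x s) 0 s := by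
      intro s hs
      refine ((hxd s hs).matrix_mulVec_const _).congr_deriv ?_
      rw [mulVec_mulVec, ← mul_kronecker_mul, hPΓ, zero_kronecker, zero_mulVec]
    rw [hxbar]
    exact constant_of_has_deriv_right_zero
      (fun s hs => (hder s hs.1).continuousAt.continuousWithinAt)
      (fun s hs => (hder s hs.1).hasDerivWithinAt) t ⟨ht, le_rfl⟩
  have hPxbar : (P ⊗ₖ (1 : Matrix (Fin n) (Fin n) ℝ)) *ᵥ xbar = xbar := by
    rw [hxbar, mulVec_mulVec, ← mul_kronecker_mul, hPP, Matrix.one_mul]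
  have hΓxbar : ∀ M : Matrix (Fin n) (Fin n) ℝ, (Γ ⊗ₖ M) *ᵥ xbar = 0 := by
    intro M
    rw [hxbar, mulVec_mulVec, ← mul_kronecker_mul, hΓP, zero_kronecker, zero_mulVec]
  set z : ℝ → Fin p × Fin n → ℝ := fun t => x t - xbar with hzdef
  have hzd : ∀ t, 0 ≤ t → HasDerivAt z ((Γ ⊗ₖ Q t) *ᵥ z t) t := by
    intro t ht
    refine ((hxd t ht).sub_const xbar).congr_deriv ?_
    rw [hzdef, mulVec_sub, hΓxbar, sub_zero]
  have hzP : ∀ t, 0 ≤ t → (P ⊗ₖ (1 : Matrix (Fin n) (Fin n) ℝ)) *ᵥ z t = 0 := by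
    intro t ht
    rw [hzdef, mulVec_sub, hmean t ht, hPxbar, sub_self]
  have hQ1 : ∀ t, 0 ≤ t → (1 - Q t).PosSemidef := by
    intro t ht
    have := posSemidef_smul_one_sub (hQ t ht).1.1 (c := 1) fun v =>
      (eunorm_mulVec_le_specNorm _ v).trans
        (mul_le_mul_of_nonneg_right (hQ t ht).2 (eunorm_nonneg v))
    rwa [one_smul] at this
  have hA : ∀ t, 0 ≤ t → ((1 : Matrix (Fin p) (Fin p) ℝ) ⊗ₖ Q t).PosSemidef := fun t ht =>
    PosSemidef.one.kronecker (hQ t ht).1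
  have hA1 : ∀ t, 0 ≤ t → (1 - (1 : Matrix (Fin p) (Fin p) ℝ) ⊗ₖ Q t).PosSemidef := by
    intro t ht
    have := (PosSemidef.one (n := Fin p) (R := ℝ)).kronecker (hQ1 t ht)
    rwa [kronecker_sub, one_kronecker_one] at this
  have hVd : ∀ t, 0 ≤ t → HasDerivAt (fun t => V (z t))
      (-(z t ⬝ᵥ ((1 : Matrix (Fin p) (Fin p) ℝ) ⊗ₖ Q t) *ᵥ z t)) t := by
    intro t ht
    have hzt : (Γ ⊗ₖ Q t) *ᵥ z t = ((Γ - P) ⊗ₖ Q t) *ᵥ z t := by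
      rw [sub_kronecker, sub_mulVec, hPkron, hzP t ht, mulVec_zero, sub_zero]
    have hd := hzd t ht
    rw [hzt] at hd
    simp only [hV]
    refine (hd.dotProduct_fun (hd.matrix_mulVec_const _)).congr_deriv ?_
    have hQt : (Q t)ᵀ = Q t := by simpa using (hQ t ht).1.1.eq
    rw [dotProduct_comm, dotProduct_mulVec, ← mulVec_transpose, dotProduct_comm, mulVec_mulVec,
      mulVec_mulVec, ← dotProduct_add, ← add_mulVec, ← kroneckerMap_transpose, hQt,
      ← mul_kronecker_mul, ← mul_kronecker_mul, Matrix.one_mul, Matrix.mul_one, ← add_kronecker,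
      hlyap, neg_kronecker, neg_mulVec, dotProduct_neg]
  have hspeed : ∀ t, 0 ≤ t → (Γ ⊗ₖ Q t) *ᵥ z t ⬝ᵥ (Γ ⊗ₖ Q t) *ᵥ z t ≤
      specNorm Γ ^ 2 * (z t ⬝ᵥ ((1 : Matrix (Fin p) (Fin p) ℝ) ⊗ₖ Q t) *ᵥ z t) := by
    intro t ht
    have hfac : (Γ ⊗ₖ Q t) *ᵥ z t = (Γ ⊗ₖ (1 : Matrix (Fin n) (Fin n) ℝ)) *ᵥ
        ((1 : Matrix (Fin p) (Fin p) ℝ) ⊗ₖ Q t) *ᵥ z t := by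
      rw [mulVec_mulVec, ← mul_kronecker_mul, Matrix.one_mul, Matrix.mul_one]
    rw [hfac]
    exact (kronecker_one_mulVec_dotProduct_le Γ _).trans (mul_le_mul_of_nonneg_left
      (mulVec_dotProduct_mulVec_le (hA t ht) (hA1 t ht) (z t)) (sq_nonneg _))
  have hAint : ∀ i j, IntervalIntegrable
      (fun t => ((1 : Matrix (Fin p) (Fin p) ℝ) ⊗ₖ Q t) i j) volume 0 T := fun i j =>
    (hQint i.2 j.2 0 T).const_mul _
  have hexc := integral_quadForm_initial_le hT hA hA1 hAint hzd hVd hspeed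
  set M : Matrix (Fin n) (Fin n) ℝ := Matrix.of fun a b => ∫ t in (0 : ℝ)..T, Q t a b with hM
  have hMpsd : M.PosSemidef := by
    refine .of_dotProduct_mulVec_nonneg ?_ fun v => ?_
    · ext a b
      refine intervalIntegral.integral_congr fun t ht => ?_
      rw [Set.uIcc_of_le hT.le] at ht
      exact (hQ t ht.1).1.1.apply a b
    · rw [star_trivial, ← integral_quadForm (fun a b => hQint a b 0 T)]
      exact intervalIntegral.integral_nonneg hT.le fun t ht =>
        (hQ t ht.1).1.dotProduct_mulVec_nonneg v
  have hMε : (M - ε • (1 : Matrix (Fin n) (Fin n) ℝ)).PosSemidef :=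
    posSemidef_sub_smul_one hMpsd fun v =>
      (mul_le_mul_of_nonneg_right hQε (eunorm_nonneg v)).trans (sigmaMin_mul_le_eunorm_mulVec M v)
  have hlow : ε * (z 0 ⬝ᵥ z 0) ≤
      ∫ t in (0 : ℝ)..T, z 0 ⬝ᵥ ((1 : Matrix (Fin p) (Fin p) ℝ) ⊗ₖ Q t) *ᵥ z 0 := by
    rw [integral_quadForm hAint]
    have hker : (Matrix.of fun i j => ∫ t in (0 : ℝ)..T,
        ((1 : Matrix (Fin p) (Fin p) ℝ) ⊗ₖ Q t) i j) = (1 : Matrix (Fin p) (Fin p) ℝ) ⊗ₖ M := by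
      ext i j
      simp only [of_apply, kroneckerMap_apply, hM, intervalIntegral.integral_const_mul]
    have := (PosSemidef.one.kronecker hMε :
      ((1 : Matrix (Fin p) (Fin p) ℝ) ⊗ₖ _).PosSemidef).dotProduct_mulVec_nonneg (z 0)
    rw [kronecker_sub, kronecker_smul, one_kronecker_one, sub_mulVec, smul_mulVec, one_mulVec,
      star_trivial, dotProduct_sub, dotProduct_smul, smul_eq_mul] at this
    rw [hker]
    linarith
  have hup : ∫ t in (0 : ℝ)..T, z 0 ⬝ᵥ ((1 : Matrix (Fin p) (Fin p) ℝ) ⊗ₖ Q t) *ᵥ z 0 ≤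
      T * (z 0 ⬝ᵥ z 0) := by
    have := intervalIntegral.integral_mono_on hT.le (intervalIntegrable_quadForm hAint (z 0))
      (intervalIntegrable_const (c := z 0 ⬝ᵥ z 0)) fun t ht => by
        have := (hA1 t ht.1).dotProduct_mulVec_nonneg (z 0)
        rw [star_trivial, sub_mulVec, one_mulVec, dotProduct_sub] at this
        linarith
    simpa using this
  have hV0 : V (z 0) ≤ sigmaMax Ω * (z 0 ⬝ᵥ z 0) := by
    have := ((posSemidef_smul_one_sub hΩpd.1 (eunorm_mulVec_le_sigmaMax Ω)).kronecker
      (PosSemidef.one (n := Fin n))).dotProduct_mulVec_nonneg (z 0)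
    rw [sub_kronecker, smul_kronecker, one_kronecker_one, sub_mulVec, smul_mulVec, one_mulVec,
      star_trivial, dotProduct_sub, dotProduct_smul, smul_eq_mul] at this
    rw [hV]
    linarith
  set m := max 1 (specNorm Γ ^ 3) with hm
  have hmpos : 0 < m := lt_of_lt_of_le one_pos (le_max_left _ _)
  have hδ0 : 0 ≤ deltaCT ε T := le_min (by positivity) (by positivity)
  have hdecay : deltaCT ε T / m * (z 0 ⬝ᵥ z 0) ≤ V (z 0) - V (z T) := by
    have hE : 0 ≤ z 0 ⬝ᵥ z 0 := Finset.sum_nonneg fun i _ => mul_self_nonneg _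
    have hfac : 0 < 3 / 2 * (1 + specNorm Γ ^ 2 * T ^ 2) := by positivity
    rcases hE.eq_or_lt with h0 | hpos
    · rw [← h0, mul_zero] at hlow ⊢
      exact nonneg_of_mul_nonneg_right (hlow.trans hexc) hfac
    · have hεT : ε ≤ T := le_of_mul_le_mul_right (hlow.trans hup) hpos
      have hδ := deltaCT_mul_le hε hT hεT (specNorm_nonneg Γ)
      have hW : 0 ≤ V (z 0) - V (z T) := nonneg_of_mul_nonneg_right
        ((mul_nonneg hε.le hE).trans (hlow.trans hexc)) hfac
      have h1 := mul_le_mul_of_nonneg_left (hlow.trans hexc) hδ0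
      have h2 := mul_le_mul_of_nonneg_right hδ hW
      have h3 : ε * (deltaCT ε T * (z 0 ⬝ᵥ z 0)) ≤ ε * ((V (z 0) - V (z T)) * m) := by
        linarith
      rw [div_mul_eq_mul_div, div_le_iff₀ hmpos]
      exact le_of_mul_le_mul_left h3 hε
  have hfinal : deltaCT ε T / (sigmaMax Ω * m) * V (z 0) ≤ deltaCT ε T / m * (z 0 ⬝ᵥ z 0) := by
    have hE : 0 ≤ z 0 ⬝ᵥ z 0 := Finset.sum_nonneg fun i _ => mul_self_nonneg _
    rcases (sigmaMax_nonneg Ω).eq_or_lt with h0 | hpos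
    · rw [← h0, zero_mul, div_zero, zero_mul]
      positivity
    · refine (mul_le_mul_of_nonneg_left hV0 (by positivity)).trans (le_of_eq ?_)
      field_simp
  change V (z T) ≤ (1 - deltaCT ε T / (sigmaMax Ω * m)) * V (z 0)
  linarith
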